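/- arXiv:1502.01774 — 2 statements merged into one kernel-verified Lean document; each statement's English description precedes it below -/
import Mathlib

section
/- For pseudo-differential operators A = Σ_{k≤m₁} f_k ∂^k and B = Σ_{j≤m₂} g_j ∂^j with the product defined by AB = Σ_k Σ_j Σ_{l≥0} C(k,l) f_k (∂^l g_j/∂x^l) ∂^{k+j-l}, where C(k,l) = k(k-1)⋯(k-l+1)/l!, the residue of the commutator [A,B] is a total x-derivative of a differential polynomial in the coefficients of A and B. -/
/-- Generalized binomial coefficient `C(k,l) = k(k-1)⋯(k-l+1)/l!` for `k : ℤ`. -/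
noncomputable def genBinom (k : ℤ) (l : ℕ) : ℚ :=
  (∏ i ∈ Finset.range l, ((k : ℚ) - (i : ℚ))) / (Nat.factorial l : ℚ)

/-- Product of pseudo-differential operators, given by coefficient sequences
`A, B : ℤ → R` over a differential ring `(R, d)`:
`(AB)_m = Σ_k Σ_l C(k,l) A_k d^l B_{m-k+l}`. -/
noncomputable def pdoMul {R : Type*} [CommRing R] [Algebra ℚ R] (d : R → R)
    (A B : ℤ → R) : ℤ → R :=
  fun m => ∑ᶠ (k : ℤ) (l : ℕ), genBinom k l • (A k * d^[l] (B (m - k + l)))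

/-- The residue of a pseudo-differential operator: the coefficient of `∂^{-1}`. -/
def pdoRes {R : Type*} (A : ℤ → R) : R := A (-1)

/-- Upper negation for generalized binomial coefficients: `C(j,l) = (-1)^l C(k,l)` when
`k + j + 1 = l`. -/
theorem genBinom_of_add_add_one_eq {k j : ℤ} {l : ℕ} (h : k + j + 1 = l) :
    genBinom j l = (-1) ^ l * genBinom k l := by
  have hj : (j : ℚ) = l - 1 - k := by
    have : (k : ℚ) + j + 1 = l := by exact_mod_cast h
    linarith
  have hprod : ∏ i ∈ Finset.range l, ((j : ℚ) - (i : ℚ)) =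
      (-1) ^ l * ∏ i ∈ Finset.range l, ((k : ℚ) - (i : ℚ)) := by
    rw [← Finset.prod_range_reflect (fun i : ℕ => (k : ℚ) - (i : ℚ)) l]
    have hneg : ((-1 : ℚ)) ^ l = ∏ _i ∈ Finset.range l, (-1 : ℚ) := by simp
    rw [hneg, ← Finset.prod_mul_distrib]
    refine Finset.prod_congr rfl fun i hi => ?_
    have hi' : i + 1 ≤ l := Finset.mem_range.mp hi
    rw [Nat.sub_sub, Nat.cast_sub (by omega), hj]
    push_cast
    ring
  rw [genBinom, genBinom, hprod, mul_div_assoc]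

/-- Iterated integration by parts: `a d^l b` and `(-1)^l b d^l a` differ by the derivative of
an element of any subalgebra containing all `d^i a` and `d^i b`. -/
theorem mul_iterate_sub_mem_map {R : Type*} [CommRing R] [Algebra ℚ R] (d : Derivation ℚ R R)
    (S : Subalgebra ℚ R) (b : R) (hb : ∀ i, (⇑d)^[i] b ∈ S) (l : ℕ) :
    ∀ a : R, (∀ i, (⇑d)^[i] a ∈ S) →
      a * (⇑d)^[l] b - (-1 : ℚ) ^ l • (b * (⇑d)^[l] a) ∈
        (Subalgebra.toSubmodule S).map (d : R →ₗ[ℚ] R) := by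
  induction l with
  | zero =>
    intro a _
    simp [mul_comm a b]
  | succ l ih =>
    intro a ha
    have hda := ih (d a) fun i => by
      simpa only [Function.iterate_succ_apply] using ha (i + 1)
    have hd : d (a * (⇑d)^[l] b) ∈ (Subalgebra.toSubmodule S).map (d : R →ₗ[ℚ] R) :=
      Submodule.mem_map_of_mem (S.mul_mem (ha 0) (hb l))
    convert Submodule.sub_mem _ hd hda using 1
    rw [Function.iterate_succ_apply' (⇑d) l b, Function.iterate_succ_apply (⇑d) l a,
      Derivation.leibniz, pow_succ]
    simp only [smul_eq_mul, mul_neg, mul_one, neg_smul]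
    ring

/-- The residue of a product as a finite sum, symmetric in the ranges of the two orders. -/
theorem pdoRes_pdoMul_eq_sum {R : Type*} [CommRing R] [Algebra ℚ R] (d : Derivation ℚ R R)
    {A B : ℤ → R} {m₁ m₂ M : ℤ}
    (hA : ∀ k : ℤ, m₁ < k → A k = 0) (hB : ∀ k : ℤ, m₂ < k → B k = 0)
    (h₁ : m₁ < M) (h₂ : m₂ < M) :
    pdoRes (pdoMul (⇑d) A B) = ∑ k ∈ Finset.Icc (-M) M, ∑ j ∈ Finset.Icc (-M) M,
      if 0 ≤ k + j + 1 then
        genBinom k (k + j + 1).toNat • (A k * (⇑d)^[(k + j + 1).toNat] (B j)) else 0 := by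
  have hzero : ∀ (k : ℤ) (l : ℕ),
      genBinom k l • (A k * (⇑d)^[l] (B (-1 - k + l))) ≠ 0 →
        k ≤ m₁ ∧ -1 - k + l ≤ m₂ := by
    intro k l hne
    refine ⟨?_, ?_⟩ <;> by_contra! hlt <;> apply hne
    · simp [hA k hlt]
    · simp [hB _ hlt, iterate_map_zero]
  have hinner : ∀ k : ℤ, ∑ᶠ l : ℕ, genBinom k l • (A k * (⇑d)^[l] (B (-1 - k + l))) =
      ∑ j ∈ Finset.Icc (-M) M, if 0 ≤ k + j + 1 then
        genBinom k (k + j + 1).toNat • (A k * (⇑d)^[(k + j + 1).toNat] (B j)) else 0 := by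
    intro k
    rw [← Finset.sum_filter, finsum_eq_sum_of_support_subset (s :=
      ((Finset.Icc (-M) M).filter (fun j => 0 ≤ k + j + 1)).image fun j => (k + j + 1).toNat)]
    · rw [Finset.sum_image]
      · refine Finset.sum_congr rfl fun j hj => ?_
        have hj' := (Finset.mem_filter.mp hj).2
        rw [Int.toNat_of_nonneg hj', show -1 - k + (k + j + 1) = j by ring]
      · intro i hi j hj hij
        simp only [Finset.coe_filter, Set.mem_ofPred_eq] at hi hj hij
        omega
    · intro l hl
      have := hzero k l hl
      simp only [Finset.coe_image, Set.mem_image, Finset.coe_filter, Finset.mem_Icc,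
        Set.mem_ofPred_eq]
      exact ⟨-1 - k + l, by omega, by omega⟩
  simp only [pdoRes, pdoMul]
  rw [finsum_eq_sum_of_support_subset (s := Finset.Icc (-M) M)]
  · exact Finset.sum_congr rfl fun k _ => hinner k
  · intro k hk
    obtain ⟨l, hl⟩ : ∃ l : ℕ, genBinom k l • (A k * (⇑d)^[l] (B (-1 - k + l))) ≠ 0 := by
      by_contra! hall
      exact hk (by simp only [hall, finsum_zero])
    have := hzero k l hl
    simp only [Finset.coe_Icc, Set.mem_Icc]
    omega

/-- for pseudo-differential operators `A = Σ_{k≤m₁} f_k ∂^k`,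
`B = Σ_{j≤m₂} g_j ∂^j`, the residue of the commutator `[A,B]` is a total
`x`-derivative of a differential polynomial in the coefficients of `A` and `B`. -/
theorem residue_commutator_is_total_derivative
    {R : Type*} [CommRing R] [Algebra ℚ R] (d : Derivation ℚ R R)
    (A B : ℤ → R) (m₁ m₂ : ℤ)
    (hA : ∀ k : ℤ, m₁ < k → A k = 0) (hB : ∀ k : ℤ, m₂ < k → B k = 0) :
    ∃ h ∈ Algebra.adjoin ℚ
        {x : R | ∃ (m : ℕ) (k : ℤ), x = (⇑d)^[m] (A k) ∨ x = (⇑d)^[m] (B k)},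
      pdoRes (pdoMul (⇑d) A B) - pdoRes (pdoMul (⇑d) B A) = d h := by
  set S := Algebra.adjoin ℚ
    {x : R | ∃ (m : ℕ) (k : ℤ), x = (⇑d)^[m] (A k) ∨ x = (⇑d)^[m] (B k)}
  have h₁ : m₁ < max m₁ m₂ + 1 := by omega
  have h₂ : m₂ < max m₁ m₂ + 1 := by omega
  suffices hmem : pdoRes (pdoMul (⇑d) A B) - pdoRes (pdoMul (⇑d) B A) ∈
      (Subalgebra.toSubmodule S).map (d : R →ₗ[ℚ] R) by
    obtain ⟨h, hh, heq⟩ := hmem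
    exact ⟨h, hh, heq.symm⟩
  rw [pdoRes_pdoMul_eq_sum d hA hB h₁ h₂, pdoRes_pdoMul_eq_sum d hB hA h₂ h₁,
    Finset.sum_comm (f := fun j k : ℤ => if 0 ≤ j + k + 1 then
      genBinom j (j + k + 1).toNat • (B j * (⇑d)^[(j + k + 1).toNat] (A k)) else 0),
    ← Finset.sum_sub_distrib]
  refine Submodule.sum_mem _ fun k _ => ?_
  rw [← Finset.sum_sub_distrib]
  refine Submodule.sum_mem _ fun j _ => ?_
  rw [add_comm j k]
  split_ifs with hkj
  · rw [genBinom_of_add_add_one_eq (Int.toNat_of_nonneg hkj).symm, mul_smul, smul_comm,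
      ← smul_sub]
    exact Submodule.smul_mem _ _ (mul_iterate_sub_mem_map d S (B j)
      (fun i => Algebra.subset_adjoin ⟨i, j, Or.inr rfl⟩) _ (A k)
      (fun i => Algebra.subset_adjoin ⟨i, k, Or.inl rfl⟩))
  · rw [sub_zero]
    exact Submodule.zero_mem _
end

section
/- Let r₁,…,r_{n+2} be the (assumed simple, pairwise distinct) critical points of λ(p) = p^{n+1} + v_n p^{n-1} + ⋯ + v₁ + u/(p-w), u ≠ 0. Given the data f^i = λ''(r_i), P^{ki}_a, Q^{ii}_a as in the paper, the quantity c_i = 1/(3(f^i)²) [ Q^{ii}_2 - λ(r_i) Q^{ii}_1 + Σ_{k≠i} (P^{ki}_2 - λ(r_i) P^{ki}_1)²/(f^k (λ(r_k) - λ(r_i))) ] equals 1/24 for every i, provided the residue-sum identities Σ_{k≠i} (λ(r_k)-λ(r_i))/(λ''(r_k)(r_k-r_i)²) = (1-n)/(2(n+1)) and the analogous identities for the weights 1/(r_k-w)² and 1/(r_k-w)⁴ hold. -/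
open Finset

/-- `λ(p) = p^{n+1} + v_n p^{n-1} + ⋯ + v₂ p + v₁ + u/(p-w)`. -/
noncomputable def lam (n : ℕ) (v : ℕ → ℂ) (u w : ℂ) : ℂ → ℂ :=
  fun p => p ^ (n + 1) + (∑ i ∈ Finset.range n, v (i + 1) * p ^ i) + u / (p - w)

/-- `λ₊(p)`: the polynomial part of `λ`. -/
noncomputable def lamPlus (n : ℕ) (v : ℕ → ℂ) : ℂ → ℂ :=
  fun p => p ^ (n + 1) + ∑ i ∈ Finset.range n, v (i + 1) * p ^ i

/-- `P₁^{ki}` evaluated at a pair of critical points `rk, ri`. -/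
noncomputable def Pone (n : ℕ) (v : ℕ → ℂ) (u w rk ri : ℂ) : ℂ :=
  (iteratedDeriv 2 (lam n v u w) rk + iteratedDeriv 2 (lam n v u w) ri) / (2 * (rk - ri))
    - (rk - ri) * (rk + ri - 2 * w) * u / ((rk - w) ^ 3 * (ri - w) ^ 3)

/-- `P₂^{ki}` evaluated at a pair of critical points `rk, ri`. -/
noncomputable def Ptwo (n : ℕ) (v : ℕ → ℂ) (u w rk ri : ℂ) : ℂ :=
  (iteratedDeriv 2 (lam n v u w) rk * lam n v u w ri
      + lam n v u w rk * iteratedDeriv 2 (lam n v u w) ri) / (2 * (rk - ri))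
    - (rk + ri - 2 * w) * (lam n v u w rk * (rk - w) - lam n v u w ri * (ri - w)) * u /
        ((rk - w) ^ 3 * (ri - w) ^ 3)

/-- `Q₁^{ii}` evaluated at a critical point `ri`. -/
noncomputable def Qone (n : ℕ) (v : ℕ → ℂ) (u w ri : ℂ) : ℂ :=
  iteratedDeriv 4 (lam n v u w) ri / 12 - 2 * u / (ri - w) ^ 5

/-- `Q₂^{ii}` evaluated at a critical point `ri`. -/
noncomputable def Qtwo (n : ℕ) (v : ℕ → ℂ) (u w ri : ℂ) : ℂ :=
  iteratedDeriv 4 (lam n v u w) ri * lam n v u w ri / 12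
    + (n : ℂ) * (iteratedDeriv 2 (lam n v u w) ri) ^ 2 / (4 * ((n : ℂ) + 1))
    - ((n : ℂ) + 2) * u ^ 2 / (((n : ℂ) + 1) * (ri - w) ^ 6)
    - (n : ℂ) * u * iteratedDeriv 2 (lam n v u w) ri / (((n : ℂ) + 1) * (ri - w) ^ 3)
    - 2 * u * deriv (lamPlus n v) w / (ri - w) ^ 4
    - 2 * u * lamPlus n v w / (ri - w) ^ 5

/-- The difference `P₂ - λ(r_i) P₁` is divisible by `λ(r_k) - λ(r_i)`, so the summand of the central
invariant is a combination of the summands with weights `1`, `1/(r_k-w)²` and `1/(r_k-w)⁴`. -/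
lemma sq_Ptwo_sub_mul_Pone_div (n : ℕ) (v : ℕ → ℂ) (u w rk ri : ℂ)
    (hr : rk ≠ ri) (hk : rk ≠ w) (hi : ri ≠ w)
    (hf : iteratedDeriv 2 (lam n v u w) rk ≠ 0) (hval : lam n v u w rk ≠ lam n v u w ri) :
    (Ptwo n v u w rk ri - lam n v u w ri * Pone n v u w rk ri) ^ 2 /
        (iteratedDeriv 2 (lam n v u w) rk * (lam n v u w rk - lam n v u w ri))
      = (iteratedDeriv 2 (lam n v u w) ri / 2 - u / (ri - w) ^ 3) ^ 2 *
          ((lam n v u w rk - lam n v u w ri) /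
            (iteratedDeriv 2 (lam n v u w) rk * (rk - ri) ^ 2))
        + 2 * (iteratedDeriv 2 (lam n v u w) ri / 2 - u / (ri - w) ^ 3) * (u / (ri - w)) *
          ((lam n v u w rk - lam n v u w ri) /
            (iteratedDeriv 2 (lam n v u w) rk * (rk - ri) ^ 2 * (rk - w) ^ 2))
        + (u / (ri - w)) ^ 2 *
          ((lam n v u w rk - lam n v u w ri) /
            (iteratedDeriv 2 (lam n v u w) rk * (rk - ri) ^ 2 * (rk - w) ^ 4)) := by
  have hd : rk - ri ≠ 0 := sub_ne_zero.mpr hr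
  have ha : rk - w ≠ 0 := sub_ne_zero.mpr hk
  have hb : ri - w ≠ 0 := sub_ne_zero.mpr hi
  have hD : lam n v u w rk - lam n v u w ri ≠ 0 := sub_ne_zero.mpr hval
  have hP : Ptwo n v u w rk ri - lam n v u w ri * Pone n v u w rk ri
      = (lam n v u w rk - lam n v u w ri) / (rk - ri) *
        (iteratedDeriv 2 (lam n v u w) ri / 2 - u / (ri - w) ^ 3
          + u / (ri - w) / (rk - w) ^ 2) := by
    unfold Ptwo Pone
    field_simp
    ring
  rw [hP]
  field_simp
  ring

/-- the central invariants of the bihamiltonian structure of the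
constrained KP hierarchy equal `1/24`: with `f^i = λ''(r_i)` and the data
`P^{ki}_a`, `Q^{ii}_a` as in the paper, and given the residue-sum identities
for the weights `1`, `1/(r_k-w)²`, `1/(r_k-w)⁴`, one has
`c_i = (1/(3 (f^i)²)) [Q^{ii}_2 - λ(r_i) Q^{ii}_1 + Σ_{k≠i} (P^{ki}_2 - λ(r_i)P^{ki}_1)²/(f^k (λ(r_k)-λ(r_i)))] = 1/24`. -/
theorem central_invariants_eq_one_twentyfourth
    (n : ℕ) (v : ℕ → ℂ) (u w : ℂ) (hu : u ≠ 0)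
    (r : Fin (n + 2) → ℂ) (hinj : Function.Injective r)
    (hw : ∀ k, r k ≠ w)
    (hcrit : ∀ k, deriv (lam n v u w) (r k) = 0)
    (hsimple : ∀ k, iteratedDeriv 2 (lam n v u w) (r k) ≠ 0)
    (i : Fin (n + 2))
    (hval : ∀ k, k ≠ i → lam n v u w (r k) ≠ lam n v u w (r i))
    (H1 : ∑ k ∈ Finset.univ.erase i,
        (lam n v u w (r k) - lam n v u w (r i)) /
          (iteratedDeriv 2 (lam n v u w) (r k) * (r k - r i) ^ 2)
      = ((1 : ℂ) - (n : ℂ)) / (2 * ((n : ℂ) + 1)))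
    (H2 : ∑ k ∈ Finset.univ.erase i,
        (lam n v u w (r k) - lam n v u w (r i)) /
          (iteratedDeriv 2 (lam n v u w) (r k) * (r k - r i) ^ 2 * (r k - w) ^ 2)
      = 1 / (2 * (r i - w) ^ 2))
    (H4 : ∑ k ∈ Finset.univ.erase i,
        (lam n v u w (r k) - lam n v u w (r i)) /
          (iteratedDeriv 2 (lam n v u w) (r k) * (r k - r i) ^ 2 * (r k - w) ^ 4)
      = 5 / (2 * (r i - w) ^ 4)
        + 2 * deriv (lamPlus n v) w / (u * (r i - w) ^ 2)
        + 2 * (lamPlus n v w - lam n v u w (r i)) / (u * (r i - w) ^ 3)) :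
    (1 / (3 * (iteratedDeriv 2 (lam n v u w) (r i)) ^ 2)) *
      (Qtwo n v u w (r i) - lam n v u w (r i) * Qone n v u w (r i)
        + ∑ k ∈ Finset.univ.erase i,
            (Ptwo n v u w (r k) (r i) - lam n v u w (r i) * Pone n v u w (r k) (r i)) ^ 2 /
              (iteratedDeriv 2 (lam n v u w) (r k) *
                (lam n v u w (r k) - lam n v u w (r i))))
      = 1 / 24 := by
  have hb : r i - w ≠ 0 := sub_ne_zero.mpr (hw i)
  have hf := hsimple i
  have hn : (n : ℂ) + 1 ≠ 0 := Nat.cast_add_one_ne_zero n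
  rw [Finset.sum_congr rfl fun k hk =>
      sq_Ptwo_sub_mul_Pone_div n v u w (r k) (r i) (hinj.ne (Finset.ne_of_mem_erase hk)) (hw k)
        (hw i) (hsimple k) (hval k (Finset.ne_of_mem_erase hk)),
    Finset.sum_add_distrib, Finset.sum_add_distrib, ← Finset.mul_sum, ← Finset.mul_sum,
    ← Finset.mul_sum, H1, H2, H4]
  unfold Qtwo Qone
  field_simp
  ring
end
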